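/- arXiv:2604.04729 — 3 statements merged into one kernel-verified Lean document; each statement's English description precedes it below -/
import Mathlib

section
/- Let D = (V, E; c; s, t) be a flow network in which every arc belongs to at least one s-t path. The flow game Γ_D is convex if and only if the following three conditions hold: (i) the directed graph (V, E) is acyclic; (ii) each bottleneck arc b ∈ B belongs to a unique s-t path, i.e., |𝒫_b| = 1; and (iii) each non-bottleneck arc e ∉ B satisfies c(e) ≥ Σ_{P ∈ 𝒫_e} c(P). -/
open scoped Classical
open Finset

noncomputable section

/-- The arcs (consecutive vertex pairs) of a vertex list. -/
def arcsOf {V : Type*} [DecidableEq V] (vs : List V) : Finset (V × V) :=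
  (vs.zip vs.tail).toFinset

/-- `vs` is the vertex list of a directed path from `a` to `b` using arcs of `E`,
with pairwise distinct vertices. -/
def IsPathList {V : Type*} (E : Finset (V × V)) (a b : V) (vs : List V) : Prop :=
  vs.Nodup ∧ vs.head? = some a ∧ vs.getLast? = some b ∧
    vs.Chain' (fun x y => (x, y) ∈ E)

/-- `P` is (the arc set of) an `s`-`t` path in the network with arc set `E`. -/
def IsSTPath {V : Type*} [DecidableEq V] (E : Finset (V × V)) (s t : V)
    (P : Finset (V × V)) : Prop :=
  ∃ vs : List V, IsPathList E s t vs ∧ P = arcsOf vs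

/-- The capacity of a path (arc set): the minimum capacity of its arcs. -/
def pathCap {V : Type*} (c : V × V → ℝ) (P : Finset (V × V)) : ℝ :=
  sInf (c '' (P : Set (V × V)))

/-- `e` is a bottleneck arc of some `s`-`t` path, i.e. `e ∈ B`. -/
def IsBottleneck {V : Type*} [DecidableEq V] (E : Finset (V × V)) (c : V × V → ℝ)
    (s t : V) (e : V × V) : Prop :=
  ∃ P : Finset (V × V), IsSTPath E s t P ∧ e ∈ P ∧ c e = pathCap c P

/-- The finite set `𝒫` of all `s`-`t` paths (as arc sets). -/
def stPaths {V : Type*} [DecidableEq V] (E : Finset (V × V)) (s t : V) :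
    Finset (Finset (V × V)) :=
  E.powerset.filter (fun P => IsSTPath E s t P)

/-- The value of a flow `f`: net flow out of the source `s`. -/
def flowValue {V : Type*} [DecidableEq V] (E : Finset (V × V)) (s : V)
    (f : V × V → ℝ) : ℝ :=
  ∑ e ∈ E.filter (fun e => e.1 = s), f e - ∑ e ∈ E.filter (fun e => e.2 = s), f e

/-- `f` is a feasible flow on the coalition `S`. -/
def IsFeasibleFlow {V : Type*} [DecidableEq V] (E : Finset (V × V)) (c : V × V → ℝ)
    (s t : V) (S : Finset (V × V)) (f : V × V → ℝ) : Prop :=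
  (∀ e ∈ E, 0 ≤ f e ∧ f e ≤ c e) ∧
  (∀ e, e ∉ S → f e = 0) ∧
  (∀ v, v ≠ s → v ≠ t →
    ∑ e ∈ E.filter (fun e => e.2 = v), f e = ∑ e ∈ E.filter (fun e => e.1 = v), f e)

/-- `γ` is the characteristic function of the flow game on `D = (V,E;c;s,t)`:
for each coalition `S ⊆ E`, `γ S` is the maximum value of a feasible flow on `S`. -/
def IsFlowGame {V : Type*} [DecidableEq V] (E : Finset (V × V)) (c : V × V → ℝ)
    (s t : V) (γ : Finset (V × V) → ℝ) : Prop :=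
  ∀ S : Finset (V × V), S ⊆ E →
    IsGreatest {x : ℝ | ∃ f, IsFeasibleFlow E c s t S f ∧ flowValue E s f = x} (γ S)

/-- The cooperative game `γ` with player set `E` is convex (supermodular). -/
def GameConvex {V : Type*} [DecidableEq V] (E : Finset (V × V))
    (γ : Finset (V × V) → ℝ) : Prop :=
  ∀ e ∈ E, ∀ S T : Finset (V × V), S ⊆ T → T ⊆ E.erase e →
    γ (insert e S) - γ S ≤ γ (insert e T) - γ T

/-- The directed graph with arc set `E` contains a directed cycle. -/
def HasDirectedCycle {V : Type*} (E : Finset (V × V)) : Prop :=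
  ∃ (v : V) (vs : List V), (v :: vs).Nodup ∧
    (v :: vs).Chain' (fun x y => (x, y) ∈ E) ∧
    ((v :: vs).getLast (List.cons_ne_nil v vs), v) ∈ E

/-!
If `∑ P ∋ e, c(P) ≤ c(e)` for every arc `e`, then all `s`-`t` paths can be saturated at once, while
one bottleneck arc from each path makes up a cut. Hence `γ S = ∑ P ⊆ S, c(P)`, a nonnegative
combination of unanimity games, which is convex.

Conversely, convexity gives `c(P) + γ S ≤ γ (P ∪ S)` whenever the path `P` is not contained in `S`.
If a bottleneck arc `b` of `P` lay on a second path `Q`, then for `P ∪ Q` minimal these two would be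
the only paths inside `P ∪ Q`, so `b` would be a cut of `P ∪ Q` and `γ (P ∪ Q) ≤ c(P)`, a
contradiction. Thus every path has an arc of its own, and adding paths through `e` one by one gives
`∑ P ∋ e, c(P) ≤ c(e)`. Finally, a path inside the splice of two paths at a common vertex must be
one of the two, so every walk runs forward along a single `s`-`t` path and cannot close up.
-/

section PathLists

variable {V : Type*} {E : Finset (V × V)} {a b v : V} {l l₁ l₂ : List V}

lemma IsPathList.reflTransGen (hl : IsPathList E a b l) :
    Relation.ReflTransGen (fun x y => (x, y) ∈ E) a b := by
  obtain ⟨-, hhead, hlast, hchain⟩ := hl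
  obtain ⟨l, rfl⟩ := List.head?_eq_some_iff.1 hhead
  refine List.relationReflTransGen_of_exists_isChain_cons l hchain ?_
  simpa [List.getLast?_eq_some_getLast] using hlast

lemma IsPathList.initial_segment (hl : IsPathList E a b (l₁ ++ v :: l₂)) :
    IsPathList E a v (l₁ ++ [v]) := by
  obtain ⟨hnodup, hhead, -, hchain⟩ := hl
  rw [List.append_cons] at hnodup hchain
  exact ⟨hnodup.of_append_left, by cases l₁ <;> simpa using hhead, by simp,
    hchain.left_of_append⟩

lemma IsPathList.final_segment (hl : IsPathList E a b (l₁ ++ v :: l₂)) :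
    IsPathList E v b (v :: l₂) := by
  obtain ⟨hnodup, -, hlast, hchain⟩ := hl
  refine ⟨hnodup.of_append_right, rfl, ?_, hchain.right_of_append⟩
  rwa [List.getLast?_append_of_ne_nil _ (List.cons_ne_nil v l₂)] at hlast

lemma exists_isPathList_of_reflTransGen
    (h : Relation.ReflTransGen (fun x y => (x, y) ∈ E) a b) : ∃ l, IsPathList E a b l := by
  induction h using Relation.ReflTransGen.head_induction_on with
  | refl => exact ⟨[b], List.nodup_singleton b, rfl, rfl, .singleton b⟩
  | @head a v hav _ ih =>
    obtain ⟨l, hl⟩ := ih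
    by_cases ha : a ∈ l
    · obtain ⟨l₁, l₂, rfl⟩ := List.append_of_mem ha
      exact ⟨a :: l₂, hl.final_segment⟩
    · obtain ⟨hnodup, hhead, hlast, hchain⟩ := hl
      obtain ⟨l, rfl⟩ := List.head?_eq_some_iff.1 hhead
      exact ⟨a :: v :: l, hnodup.cons ha, rfl, by rwa [List.getLast?_cons_cons],
        .cons_cons hav hchain⟩

end PathLists

section Arcs

variable {V : Type*} [DecidableEq V] {E T : Finset (V × V)} {a b v x y : V}
  {l l₁ l₂ m : List V}

@[simp] lemma arcsOf_singleton (a : V) : arcsOf [a] = ∅ := by simp [arcsOf]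

@[simp] lemma arcsOf_cons_cons (a b : V) (l : List V) :
    arcsOf (a :: b :: l) = insert (a, b) (arcsOf (b :: l)) := by simp [arcsOf]

lemma arcsOf_append (l₁ : List V) (v : V) (l₂ : List V) :
    arcsOf (l₁ ++ v :: l₂) = arcsOf (l₁ ++ [v]) ∪ arcsOf (v :: l₂) := by
  induction l₁ with
  | nil => simp
  | cons a l₁ ih => cases l₁ <;> simp_all

lemma fst_mem_of_mem_arcsOf (h : (x, y) ∈ arcsOf l) : x ∈ l :=
  (List.of_mem_zip (List.mem_toFinset.1 h)).1

lemma snd_mem_of_mem_arcsOf (h : (x, y) ∈ arcsOf l) : y ∈ l :=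
  List.mem_of_mem_tail (List.of_mem_zip (List.mem_toFinset.1 h)).2

lemma exists_eq_append_of_mem_arcsOf (h : (x, y) ∈ arcsOf l) :
    ∃ l₁ l₂, l = l₁ ++ x :: y :: l₂ := by
  induction l with
  | nil => simp [arcsOf] at h
  | cons a l ih =>
    cases l with
    | nil => simp at h
    | cons b l =>
      rw [arcsOf_cons_cons, mem_insert, Prod.mk.injEq] at h
      rcases h with ⟨rfl, rfl⟩ | h
      · exact ⟨[], l, rfl⟩
      · obtain ⟨l₁, l₂, hl⟩ := ih h
        exact ⟨a :: l₁, l₂, by rw [hl, List.cons_append]⟩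

lemma isChain_iff_arcsOf_subset : l.IsChain (fun x y => (x, y) ∈ E) ↔ arcsOf l ⊆ E := by
  induction l with
  | nil => simp [arcsOf]
  | cons a l ih => cases l <;> simp_all [insert_subset_iff]

lemma IsPathList.arcsOf_subset (hl : IsPathList E a b l) : arcsOf l ⊆ E :=
  isChain_iff_arcsOf_subset.1 hl.2.2.2

lemma IsPathList.of_arcsOf_subset (hl : IsPathList E a b l) (h : arcsOf l ⊆ T) :
    IsPathList T a b l :=
  ⟨hl.1, hl.2.1, hl.2.2.1, isChain_iff_arcsOf_subset.2 h⟩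

lemma disjoint_arcsOf_of_nodup (h : (l₁ ++ v :: l₂).Nodup) :
    Disjoint (arcsOf (l₁ ++ [v])) (arcsOf (v :: l₂)) := by
  rw [Finset.disjoint_left]
  rintro ⟨x, y⟩ hinitial hfinal
  obtain ⟨k₁, k₂, hk⟩ := exists_eq_append_of_mem_arcsOf hinitial
  have hx : x ∈ l₁ := by
    have hdropLast := congrArg List.dropLast hk
    rw [List.dropLast_concat, List.dropLast_append_of_ne_nil (List.cons_ne_nil x _),
      List.dropLast_cons_cons] at hdropLast
    simp [hdropLast]
  exact List.disjoint_of_nodup_append h hx (fst_mem_of_mem_arcsOf hfinal)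

lemma eq_of_arcsOf_cons_eq (hl : (a :: l).Nodup) (hm : (a :: m).Nodup)
    (h : arcsOf (a :: l) = arcsOf (a :: m)) : l = m := by
  induction l generalizing a m with
  | nil =>
    cases m with
    | nil => rfl
    | cons y m => simp [(insert_ne_empty _ _).symm] at h
  | cons x l ih =>
    cases m with
    | nil => simp at h
    | cons y m =>
      have haxl (z : V) : (a, z) ∉ arcsOf (x :: l) := fun haz =>
        hl.notMem (fst_mem_of_mem_arcsOf haz)
      have haym (z : V) : (a, z) ∉ arcsOf (y :: m) := fun haz =>
        hm.notMem (fst_mem_of_mem_arcsOf haz)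
      rw [arcsOf_cons_cons, arcsOf_cons_cons] at h
      obtain rfl : x = y := by
        have hax : (a, x) ∈ insert (a, y) (arcsOf (y :: m)) := h ▸ mem_insert_self ..
        simpa [haym] using hax
      have htail : arcsOf (x :: l) = arcsOf (x :: m) := by
        rw [← erase_insert (haxl x), h, erase_insert (haym x)]
      rw [ih hl.of_cons hm.of_cons htail]

lemma IsPathList.eq_of_arcsOf_eq (hl : IsPathList E a b l) (hm : IsPathList T a b m)
    (h : arcsOf l = arcsOf m) : l = m := by
  obtain ⟨hlnodup, hlhead, -⟩ := hl
  obtain ⟨hmnodup, hmhead, -⟩ := hm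
  obtain ⟨l, rfl⟩ := List.head?_eq_some_iff.1 hlhead
  obtain ⟨m, rfl⟩ := List.head?_eq_some_iff.1 hmhead
  rw [eq_of_arcsOf_cons_eq hlnodup hmnodup h]

lemma IsPathList.sum_sub (hl : IsPathList E a b l) (π : V → ℝ) :
    ∑ e ∈ arcsOf l, (π e.1 - π e.2) = π a - π b := by
  induction l generalizing a with
  | nil => simp [IsPathList] at hl
  | cons x l ih =>
    obtain ⟨hnodup, hhead, hlast, hchain⟩ := hl
    obtain rfl : x = a := by simpa using hhead
    cases l with
    | nil => simp_all
    | cons y l =>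
      rw [arcsOf_cons_cons, sum_insert fun h => hnodup.notMem (fst_mem_of_mem_arcsOf h),
        ih ⟨hnodup.of_cons, rfl, by rwa [List.getLast?_cons_cons] at hlast, hchain.tail⟩]
      ring

/- A path carries no circulation: testing the balance against the indicator of its first vertex
kills its first arc, and so on along the path. -/
lemma eq_zero_of_balanced_on_arcsOf {g : V × V → ℝ} (hl : l.Nodup)
    (hg : ∀ π : V → ℝ, ∑ e ∈ arcsOf l, g e * (π e.1 - π e.2) = 0) :
    ∀ e ∈ arcsOf l, g e = 0 := by
  induction l with
  | nil => simp [arcsOf]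
  | cons a l ih =>
    cases l with
    | nil => simp
    | cons b l =>
      have ha : a ∉ b :: l := hl.notMem
      have hsplit (π : V → ℝ) : g (a, b) * (π a - π b) +
          ∑ e ∈ arcsOf (b :: l), g e * (π e.1 - π e.2) = 0 := by
        rw [← hg π, arcsOf_cons_cons, sum_insert fun h => ha (fst_mem_of_mem_arcsOf h)]
      have hfirst : g (a, b) = 0 := by
        have htail : ∑ e ∈ arcsOf (b :: l), g e *
            ((Pi.single a 1 : V → ℝ) e.1 - (Pi.single a 1 : V → ℝ) e.2) = 0 := by
          refine sum_eq_zero fun e he => ?_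
          rw [Pi.single_eq_of_ne (ne_of_mem_of_not_mem (fst_mem_of_mem_arcsOf he) ha),
            Pi.single_eq_of_ne (ne_of_mem_of_not_mem (snd_mem_of_mem_arcsOf he) ha)]
          ring
        have hab : b ≠ a := ne_of_mem_of_not_mem List.mem_cons_self ha
        simpa [htail, hab] using hsplit (Pi.single a 1)
      have htail := ih hl.of_cons fun π => by simpa [hfirst] using hsplit π
      rw [arcsOf_cons_cons]
      exact (forall_mem_insert ..).2 ⟨hfirst, htail⟩

end Arcs

section Capacities

variable {V : Type*} {P : Finset (V × V)} {c : V × V → ℝ} {e : V × V}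

lemma pathCap_le_of_mem (he : e ∈ P) : pathCap c P ≤ c e :=
  csInf_le (P.finite_toSet.image c).bddBelow ⟨e, he, rfl⟩

lemma exists_mem_eq_pathCap (hP : P.Nonempty) (c : V × V → ℝ) : ∃ b ∈ P, c b = pathCap c P :=
  (hP.to_set.image c).csInf_mem (P.finite_toSet.image c)

lemma pathCap_nonneg (hc : ∀ e ∈ P, 0 ≤ c e) : 0 ≤ pathCap c P :=
  Real.sInf_nonneg (by rintro _ ⟨e, he, rfl⟩; exact hc e he)

end Capacities

section STPaths

variable {V : Type*} [DecidableEq V] {E P Q X Y : Finset (V × V)} {s t x y : V}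

lemma IsSTPath.subset (hP : IsSTPath E s t P) : P ⊆ E := by
  obtain ⟨l, hl, rfl⟩ := hP
  exact hl.arcsOf_subset

lemma mem_stPaths : P ∈ stPaths E s t ↔ IsSTPath E s t P := by
  simp only [stPaths, mem_filter, mem_powerset, and_iff_right_iff_imp]
  exact IsSTPath.subset

lemma IsSTPath.sum_sub (hP : IsSTPath E s t P) (π : V → ℝ) :
    ∑ e ∈ P, (π e.1 - π e.2) = π s - π t := by
  obtain ⟨l, hl, rfl⟩ := hP
  exact hl.sum_sub π

lemma IsSTPath.nonempty (hP : IsSTPath E s t P) (hst : s ≠ t) : P.Nonempty := by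
  rw [nonempty_iff_ne_empty]
  rintro rfl
  simpa [hst] using hP.sum_sub (Pi.single s 1)

/- The difference of the indicators of `X` and `Y` is a circulation supported on `P`. -/
lemma IsSTPath.eq_of_union_eq (hX : IsSTPath E s t X) (hY : IsSTPath E s t Y)
    (hP : IsSTPath E x y P) (h : X ∪ P = Y ∪ P) : X = Y := by
  have hsdiff : X \ P = Y \ P := by rw [← union_sdiff_right, h, union_sdiff_right]
  have hinter (π : V → ℝ) :
      ∑ e ∈ P ∩ X, (π e.1 - π e.2) = ∑ e ∈ P ∩ Y, (π e.1 - π e.2) := by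
    have hXsum := sum_inter_add_sum_sdiff X P fun e => π e.1 - π e.2
    have hYsum := sum_inter_add_sum_sdiff Y P fun e => π e.1 - π e.2
    rw [hX.sum_sub, inter_comm] at hXsum
    rw [hY.sum_sub, inter_comm, ← hsdiff] at hYsum
    linarith
  have hzero : ∀ e ∈ P, (if e ∈ X then 1 else 0 : ℝ) - (if e ∈ Y then 1 else 0) = 0 := by
    obtain ⟨l, hl, rfl⟩ := hP
    refine eq_zero_of_balanced_on_arcsOf hl.1 fun π => ?_
    simp only [sub_mul, ite_mul, one_mul, zero_mul, sum_sub_distrib (s := arcsOf l),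
      sum_ite_mem, hinter π, sub_self]
  ext e
  by_cases he : e ∈ P
  · have := hzero e he
    by_cases heX : e ∈ X <;> by_cases heY : e ∈ Y <;> simp_all
  · simpa [he] using Finset.ext_iff.1 hsdiff e

lemma IsSTPath.eq_of_subset (hP : IsSTPath E s t P) (hQ : IsSTPath E s t Q) (h : P ⊆ Q) :
    P = Q :=
  hP.eq_of_union_eq hQ hQ (by rw [union_eq_right.2 h, union_idempotent])

end STPaths

section Flows

variable {V : Type*} [DecidableEq V] {E S : Finset (V × V)} {c f : V × V → ℝ} {s t : V}

/- `flowValue E v f` makes sense at every vertex `v`: it is the net outflow of `f` there. -/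
lemma sum_mul_flowValue {W : Finset V} (hW : ∀ e ∈ E, e.1 ∈ W ∧ e.2 ∈ W) (π : V → ℝ)
    (f : V × V → ℝ) :
    ∑ v ∈ W, π v * flowValue E v f = ∑ e ∈ E, f e * (π e.1 - π e.2) := by
  have hfiber (i : V × V → V) (hi : ∀ e ∈ E, i e ∈ W) :
      ∑ v ∈ W, π v * ∑ e ∈ E with i e = v, f e = ∑ e ∈ E, f e * π (i e) := by
    rw [← sum_fiberwise_of_maps_to hi]
    refine sum_congr rfl fun v _ => ?_
    rw [mul_sum]
    refine sum_congr rfl fun e he => ?_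
    rw [(mem_filter.1 he).2, mul_comm]
  simp only [flowValue, mul_sub, sum_sub_distrib]
  rw [hfiber Prod.fst fun e he => (hW e he).1, hfiber Prod.snd fun e he => (hW e he).2]

lemma flowValue_eq_sum_single (E : Finset (V × V)) (v : V) (f : V × V → ℝ) :
    flowValue E v f =
      ∑ e ∈ E, f e * ((Pi.single v 1 : V → ℝ) e.1 - (Pi.single v 1 : V → ℝ) e.2) := by
  simp [flowValue, sum_filter, Pi.single_apply, mul_sub]

lemma IsFeasibleFlow.flowValue_eq_sum_potential (hf : IsFeasibleFlow E c s t S f) {π : V → ℝ}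
    (hs : π s = 1) (ht : π t = 0) :
    flowValue E s f = ∑ e ∈ E, f e * (π e.1 - π e.2) := by
  have hW : ∀ e ∈ E, e.1 ∈ insert s (E.image Prod.fst ∪ E.image Prod.snd) ∧
      e.2 ∈ insert s (E.image Prod.fst ∪ E.image Prod.snd) := fun e he => by
    constructor
    · exact mem_insert_of_mem (mem_union_left _ (mem_image_of_mem _ he))
    · exact mem_insert_of_mem (mem_union_right _ (mem_image_of_mem _ he))
  rw [← sum_mul_flowValue hW π f, sum_eq_single_of_mem s (mem_insert_self ..), hs, one_mul]
  intro v _ hvs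
  by_cases hvt : v = t
  · rw [hvt, ht, zero_mul]
  · rw [flowValue, hf.2.2 v hvs hvt, sub_self, mul_zero]

lemma IsFeasibleFlow.flowValue_le_cut (hf : IsFeasibleFlow E c s t S f) (hS : S ⊆ E)
    {A : V → Prop} (hs : A s) (ht : ¬ A t) :
    flowValue E s f ≤ ∑ e ∈ S with A e.1 ∧ ¬ A e.2, c e := by
  rw [hf.flowValue_eq_sum_potential (π := fun v => if A v then 1 else 0) (if_pos hs) (if_neg ht),
    ← sum_subset hS fun e _ he => by rw [hf.2.1 e he, zero_mul], sum_filter]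
  refine sum_le_sum fun e he => ?_
  obtain ⟨hnonneg, hle⟩ := hf.1 e (hS he)
  by_cases h₁ : A e.1 <;> by_cases h₂ : A e.2 <;> simp [h₁, h₂, hnonneg, hle]

/-- The superposition of the path flows sending `w P` units along each path `P ∈ F`. -/
def pathFlow {V : Type*} [DecidableEq V] (F : Finset (Finset (V × V)))
    (w : Finset (V × V) → ℝ) (e : V × V) : ℝ :=
  ∑ P ∈ F with e ∈ P, w P

lemma flowValue_pathFlow {F : Finset (Finset (V × V))} (hF : ∀ P ∈ F, IsSTPath E s t P)
    (w : Finset (V × V) → ℝ) (v : V) :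
    flowValue E v (pathFlow F w) =
      (∑ P ∈ F, w P) * ((Pi.single v 1 : V → ℝ) s - (Pi.single v 1 : V → ℝ) t) := by
  simp only [flowValue_eq_sum_single, pathFlow, sum_filter, sum_mul]
  rw [sum_comm]
  refine sum_congr rfl fun P hP => ?_
  rw [← (hF P hP).sum_sub, mul_sum]
  simp only [ite_mul, zero_mul, sum_ite_mem, inter_eq_right.2 (hF P hP).subset]

lemma isFeasibleFlow_pathFlow {F : Finset (Finset (V × V))} {w : Finset (V × V) → ℝ}
    (hF : ∀ P ∈ F, IsSTPath E s t P) (hFS : ∀ P ∈ F, P ⊆ S) (hw : ∀ P ∈ F, 0 ≤ w P)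
    (hcap : ∀ e ∈ E, pathFlow F w e ≤ c e) : IsFeasibleFlow E c s t S (pathFlow F w) := by
  refine ⟨fun e he => ⟨sum_nonneg fun P hP => hw P (mem_filter.1 hP).1, hcap e he⟩,
    fun e he => ?_, fun v hvs hvt => ?_⟩
  · rw [pathFlow, filter_false_of_mem fun P hP heP => he (hFS P hP heP), sum_empty]
  · have hbalance := flowValue_pathFlow hF w v
    rw [Pi.single_eq_of_ne hvs.symm, Pi.single_eq_of_ne hvt.symm, sub_self, mul_zero] at hbalance
    exact (sub_eq_zero.1 hbalance).symm

end Flows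

section Games

variable {V : Type*} [DecidableEq V] {E A B : Finset (V × V)} {γ : Finset (V × V) → ℝ}

lemma GameConvex.marginal_le_marginal (hG : GameConvex E γ) {S T D : Finset (V × V)}
    (hST : S ⊆ T) (hT : T ⊆ E) (hD : D ⊆ E) (hTD : Disjoint T D) :
    γ (S ∪ D) - γ S ≤ γ (T ∪ D) - γ T := by
  induction D using Finset.induction_on with
  | empty => simp
  | insert e D he ih =>
    rw [insert_subset_iff] at hD
    rw [disjoint_insert_right] at hTD
    have heTD : e ∉ T ∪ D := by simp [hTD.1, he]
    have hmarginal := hG e hD.1 (S ∪ D) (T ∪ D) (union_subset_union_left hST)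
      (subset_erase.2 ⟨union_subset hT hD.2, heTD⟩)
    rw [union_insert, union_insert]
    linarith [ih hD.2 hTD.2]

lemma GameConvex.add_le_union_add_inter (hG : GameConvex E γ) (hA : A ⊆ E) (hB : B ⊆ E) :
    γ A + γ B ≤ γ (A ∪ B) + γ (A ∩ B) := by
  have h := hG.marginal_le_marginal (D := A \ B) (inter_subset_right (s₁ := A)) hB
    (sdiff_subset.trans hA) disjoint_sdiff
  rw [union_sdiff_self_eq_union, union_comm B A, union_comm (A ∩ B), sdiff_union_inter] at h
  linarith

/- Such a `γ` is a nonnegative combination of unanimity games: the marginal contribution of `e`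
to `S` is the total weight of the `P ∋ e` whose other members all lie in `S`. -/
lemma gameConvex_of_eq_sum_subset {F : Finset (Finset (V × V))} {w : Finset (V × V) → ℝ}
    (hw : ∀ P ∈ F, 0 ≤ w P) (hγ : ∀ S ⊆ E, γ S = ∑ P ∈ F with P ⊆ S, w P) :
    GameConvex E γ := by
  have hmarginal {e : V × V} (he : e ∈ E) {S : Finset (V × V)} (hS : S ⊆ E.erase e) :
      γ (insert e S) - γ S = ∑ P ∈ F with e ∈ P ∧ P ⊆ insert e S, w P := by
    obtain ⟨hSE, heS⟩ := subset_erase.1 hS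
    rw [hγ _ (insert_subset he hSE), hγ S hSE, ← sum_filter_add_sum_filter_not _ (e ∈ ·),
      filter_filter, filter_filter]
    have hwithout : {P ∈ F | P ⊆ insert e S ∧ e ∉ P} = {P ∈ F | P ⊆ S} :=
      filter_congr fun P _ => ⟨fun h => (subset_insert_iff_of_notMem h.2).1 h.1,
        fun h => ⟨h.trans (subset_insert e S), fun heP => heS (h heP)⟩⟩
    simp only [hwithout, and_comm, add_sub_cancel_right]
  intro e he S T hST hT
  rw [hmarginal he hT, hmarginal he (hST.trans hT)]
  refine sum_le_sum_of_subset_of_nonneg ?_ fun P hP _ => hw P (mem_filter.1 hP).1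
  exact monotone_filter_right _ fun P _ h => ⟨h.1, h.2.trans (insert_subset_insert e hST)⟩

end Games

section FlowGames

variable {V : Type*} [DecidableEq V] {E S P Q : Finset (V × V)} {c : V × V → ℝ} {s t : V}
  {γ : Finset (V × V) → ℝ}

lemma IsFlowGame.sum_le (hγ : IsFlowGame E c s t γ) (hst : s ≠ t) (hS : S ⊆ E)
    {F : Finset (Finset (V × V))} {w : Finset (V × V) → ℝ} (hF : ∀ P ∈ F, IsSTPath E s t P)
    (hFS : ∀ P ∈ F, P ⊆ S) (hw : ∀ P ∈ F, 0 ≤ w P) (hcap : ∀ e ∈ E, pathFlow F w e ≤ c e) :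
    ∑ P ∈ F, w P ≤ γ S := by
  refine (hγ S hS).2 ⟨pathFlow F w, isFeasibleFlow_pathFlow hF hFS hw hcap, ?_⟩
  simp [flowValue_pathFlow hF, hst.symm]

lemma IsFlowGame.nonneg (hγ : IsFlowGame E c s t γ) (hc : ∀ e ∈ E, 0 ≤ c e) (hS : S ⊆ E) :
    0 ≤ γ S :=
  (hγ S hS).2 ⟨0, ⟨fun e he => ⟨le_rfl, hc e he⟩, by simp, by simp⟩, by simp [flowValue]⟩

lemma IsFlowGame.pathCap_le (hγ : IsFlowGame E c s t γ) (hst : s ≠ t) (hc : ∀ e ∈ E, 0 ≤ c e)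
    (hP : IsSTPath E s t P) : pathCap c P ≤ γ P := by
  have hcap : ∀ e ∈ E, pathFlow {P} (pathCap c) e ≤ c e := fun e he => by
    by_cases heP : e ∈ P
    · simpa [pathFlow, filter_singleton, heP] using pathCap_le_of_mem heP
    · simpa [pathFlow, filter_singleton, heP] using hc e he
  simpa using hγ.sum_le hst hP.subset (by simpa using hP) (by simp)
    (by simpa using pathCap_nonneg fun e he => hc e (hP.subset he)) hcap

/- The cut consists of the vertices reachable from `s` inside `S \ K`. -/
lemma IsFlowGame.le_sum_of_hits_paths (hγ : IsFlowGame E c s t γ) (hc : ∀ e ∈ E, 0 ≤ c e)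
    (hS : S ⊆ E) {K : Finset (V × V)} (hK : K ⊆ E)
    (hhits : ∀ P, IsSTPath E s t P → P ⊆ S → ∃ e ∈ P, e ∈ K) : γ S ≤ ∑ e ∈ K, c e := by
  obtain ⟨f, hf, hvalue⟩ := (hγ S hS).1
  have ht : ¬ Relation.ReflTransGen (fun x y => (x, y) ∈ S \ K) s t := fun hreach => by
    obtain ⟨l, hl⟩ := exists_isPathList_of_reflTransGen hreach
    have hlS : arcsOf l ⊆ S := hl.arcsOf_subset.trans sdiff_subset
    obtain ⟨e, hel, heK⟩ := hhits _ ⟨l, hl.of_arcsOf_subset (hlS.trans hS), rfl⟩ hlS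
    exact (mem_sdiff.1 (hl.arcsOf_subset hel)).2 heK
  rw [← hvalue]
  refine (hf.flowValue_le_cut hS .refl ht).trans
    (sum_le_sum_of_subset_of_nonneg ?_ fun e he _ => hc e (hK he))
  rintro ⟨x, y⟩ he
  obtain ⟨heS, hx, hy⟩ := mem_filter.1 he
  by_contra heK
  exact hy (hx.tail (mem_sdiff.2 ⟨heS, heK⟩))

lemma IsFlowGame.le_sum_pathCap (hγ : IsFlowGame E c s t γ) (hst : s ≠ t)
    (hc : ∀ e ∈ E, 0 ≤ c e) (hS : S ⊆ E) :
    γ S ≤ ∑ P ∈ stPaths E s t with P ⊆ S, pathCap c P := by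
  have hmem {P} (hP : P ∈ {P ∈ stPaths E s t | P ⊆ S}) : IsSTPath E s t P ∧ P ⊆ S := by
    simpa [mem_stPaths] using hP
  have : Nonempty (V × V) := ⟨(s, t)⟩
  choose! b hb hcb using fun P (hP : IsSTPath E s t P) => exists_mem_eq_pathCap (hP.nonempty hst) c
  have hbE : image b {P ∈ stPaths E s t | P ⊆ S} ⊆ E := image_subset_iff.2 fun P hP =>
    hS ((hmem hP).2 (hb P (hmem hP).1))
  calc γ S ≤ ∑ e ∈ image b {P ∈ stPaths E s t | P ⊆ S}, c e :=
        hγ.le_sum_of_hits_paths hc hS hbE fun P hP hPS =>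
          ⟨b P, hb P hP, mem_image_of_mem b (mem_filter.2 ⟨mem_stPaths.2 hP, hPS⟩)⟩
    _ ≤ ∑ P ∈ stPaths E s t with P ⊆ S, c (b P) :=
        sum_image_le_of_nonneg fun e he => hc e (hbE he)
    _ = ∑ P ∈ stPaths E s t with P ⊆ S, pathCap c P :=
        sum_congr rfl fun P hP => hcb P (hmem hP).1

lemma IsFlowGame.eq_sum_pathCap (hγ : IsFlowGame E c s t γ) (hst : s ≠ t)
    (hc : ∀ e ∈ E, 0 ≤ c e)
    (hpack : ∀ e ∈ E, ∑ P ∈ stPaths E s t with e ∈ P, pathCap c P ≤ c e) (hS : S ⊆ E) :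
    γ S = ∑ P ∈ stPaths E s t with P ⊆ S, pathCap c P := by
  have hnonneg {P} (hP : P ∈ stPaths E s t) : 0 ≤ pathCap c P :=
    pathCap_nonneg fun e he => hc e ((mem_stPaths.1 hP).subset he)
  refine (hγ.le_sum_pathCap hst hc hS).antisymm (hγ.sum_le hst hS
    (fun P hP => mem_stPaths.1 (mem_filter.1 hP).1) (fun P hP => (mem_filter.1 hP).2)
    (fun P hP => hnonneg (mem_filter.1 hP).1) fun e he => le_trans ?_ (hpack e he))
  exact sum_le_sum_of_subset_of_nonneg (filter_subset_filter _ (filter_subset _ _))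
    fun P hP _ => hnonneg (mem_filter.1 hP).1

lemma IsFlowGame.gameConvex (hγ : IsFlowGame E c s t γ) (hst : s ≠ t) (hc : ∀ e ∈ E, 0 ≤ c e)
    (hpack : ∀ e ∈ E, ∑ P ∈ stPaths E s t with e ∈ P, pathCap c P ≤ c e) : GameConvex E γ :=
  gameConvex_of_eq_sum_subset
    (fun _ hP => pathCap_nonneg fun e he => hc e ((mem_stPaths.1 hP).subset he))
    fun _ hS => hγ.eq_sum_pathCap hst hc hpack hS

lemma IsFlowGame.pathCap_add_le_of_gameConvex (hγ : IsFlowGame E c s t γ) (hG : GameConvex E γ)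
    (hst : s ≠ t) (hc : ∀ e ∈ E, 0 ≤ c e) (hP : IsSTPath E s t P) (hS : S ⊆ E) (hPS : ¬ P ⊆ S) :
    pathCap c P + γ S ≤ γ (P ∪ S) := by
  have hinter : γ (P ∩ S) ≤ 0 := by
    refine hγ.le_sum_of_hits_paths hc (inter_subset_right.trans hS) (empty_subset E)
      fun Q hQ hQPS => absurd ?_ hPS
    rw [← hQ.eq_of_subset hP (hQPS.trans inter_subset_left)]
    exact hQPS.trans inter_subset_right
  linarith [hG.add_le_union_add_inter hP.subset hS, hγ.pathCap_le hst hc hP]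

/- Consider a counterexample with `P ∪ Q` minimal. A third path `Y ⊆ P ∪ Q` shares a bottleneck
arc with `P` or with `Q`, and by `IsSTPath.eq_of_union_eq` replacing the other path by `Y` shrinks
the union. So `P` and `Q` are the only paths in `P ∪ Q`, the arc `b` cuts both of them, and
`γ (P ∪ Q) ≤ c b = pathCap c P < pathCap c P + pathCap c Q`. -/
lemma IsFlowGame.eq_of_bottleneck_mem (hγ : IsFlowGame E c s t γ) (hG : GameConvex E γ)
    (hst : s ≠ t) (hc : ∀ e ∈ E, 0 < c e) {b : V × V} (hP : IsSTPath E s t P)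
    (hQ : IsSTPath E s t Q) (hbP : b ∈ P) (hbQ : b ∈ Q) (hcb : c b = pathCap c P) : P = Q := by
  induction hU : P ∪ Q using Finset.strongInduction generalizing P Q b with
  | H U ih =>
  subst hU
  by_contra hne
  have honly : ∀ Y, IsSTPath E s t Y → Y ⊆ P ∪ Q → Y = P ∨ Y = Q := by
    intro Y hY hYPQ
    by_contra! hYne
    obtain ⟨b', hb'Y, hcb'⟩ := exists_mem_eq_pathCap (hY.nonempty hst) c
    rcases mem_union.1 (hYPQ hb'Y) with hb'P | hb'Q
    · have hssubset : Y ∪ P ⊂ P ∪ Q :=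
        (union_subset hYPQ subset_union_left).ssubset_of_ne fun h =>
          hYne.2 (hY.eq_of_union_eq hQ hP (h.trans (union_comm P Q)))
      exact hYne.1 (ih _ hssubset hY hP hb'Y hb'P hcb' rfl)
    · have hssubset : Y ∪ Q ⊂ P ∪ Q :=
        (union_subset hYPQ subset_union_right).ssubset_of_ne fun h =>
          hYne.1 (hY.eq_of_union_eq hP hQ h)
      exact hYne.2 (ih _ hssubset hY hQ hb'Y hb'Q hcb' rfl)
  have hc' : ∀ e ∈ E, 0 ≤ c e := fun e he => (hc e he).le
  have hcut : γ (P ∪ Q) ≤ c b := by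
    simpa using hγ.le_sum_of_hits_paths hc' (union_subset hP.subset hQ.subset)
      (singleton_subset_iff.2 (hP.subset hbP)) fun Y hY hYPQ =>
        ⟨b, by rcases honly Y hY hYPQ with rfl | rfl <;> assumption, mem_singleton_self b⟩
  have hpos : 0 < pathCap c Q := by
    obtain ⟨e, he, hce⟩ := exists_mem_eq_pathCap (hQ.nonempty hst) c
    exact hce ▸ hc e (hQ.subset he)
  linarith [hγ.pathCap_add_le_of_gameConvex hG hst hc' hP hQ.subset
    fun h => hne (hP.eq_of_subset hQ h), hγ.pathCap_le hst hc' hQ]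

end FlowGames

section PrivateArcs

/-- Every `s`-`t` path has a private arc, one that lies on no other `s`-`t` path. This is
the consequence of the uniqueness condition on bottleneck arcs that does not involve capacities. -/
def HasPrivateArcs {V : Type*} [DecidableEq V] (E : Finset (V × V)) (s t : V) : Prop :=
  ∀ P, IsSTPath E s t P → ∃ b ∈ P, ∀ Q, IsSTPath E s t Q → b ∈ Q → P = Q

variable {V : Type*} [DecidableEq V] {E : Finset (V × V)} {c : V × V → ℝ} {s t : V}
  {γ : Finset (V × V) → ℝ}

lemma hasPrivateArcs_of_bottleneck_existsUnique (hst : s ≠ t)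
    (hunique : ∀ b, IsBottleneck E c s t b → ∃! P, IsSTPath E s t P ∧ b ∈ P) :
    HasPrivateArcs E s t := by
  intro P hP
  obtain ⟨b, hbP, hcb⟩ := exists_mem_eq_pathCap (hP.nonempty hst) c
  exact ⟨b, hbP, fun Q hQ hbQ => (hunique b ⟨P, hP, hbP, hcb⟩).unique ⟨hP, hbP⟩ ⟨hQ, hbQ⟩⟩

lemma IsFlowGame.sum_pathCap_le_biUnion (hγ : IsFlowGame E c s t γ) (hG : GameConvex E γ)
    (hst : s ≠ t) (hc : ∀ e ∈ E, 0 ≤ c e) (hprivate : HasPrivateArcs E s t)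
    {F : Finset (Finset (V × V))} (hF : ∀ P ∈ F, IsSTPath E s t P) :
    ∑ P ∈ F, pathCap c P ≤ γ (F.biUnion id) := by
  induction F using Finset.induction_on with
  | empty => simpa using hγ.nonneg hc (empty_subset E)
  | insert P F hPF ih =>
    obtain ⟨hP, hF⟩ := (forall_mem_insert ..).1 hF
    have hPnot : ¬ P ⊆ F.biUnion id := fun h => by
      obtain ⟨b, hbP, hb⟩ := hprivate P hP
      obtain ⟨Q, hQF, hbQ⟩ := mem_biUnion.1 (h hbP)
      exact hPF (hb Q (hF Q hQF) hbQ ▸ hQF)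
    have hFE : F.biUnion id ⊆ E := biUnion_subset.2 fun Q hQ => (hF Q hQ).subset
    rw [sum_insert hPF, biUnion_insert, id]
    linarith [ih hF, hγ.pathCap_add_le_of_gameConvex hG hst hc hP hFE hPnot]

lemma IsFlowGame.sum_pathCap_le (hγ : IsFlowGame E c s t γ) (hG : GameConvex E γ)
    (hst : s ≠ t) (hc : ∀ e ∈ E, 0 ≤ c e) (hprivate : HasPrivateArcs E s t) {e : V × V}
    (he : e ∈ E) : ∑ P ∈ stPaths E s t with e ∈ P, pathCap c P ≤ c e := by
  have hF : ∀ P ∈ {P ∈ stPaths E s t | e ∈ P}, IsSTPath E s t P := fun P hP =>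
    mem_stPaths.1 (mem_filter.1 hP).1
  refine (hγ.sum_pathCap_le_biUnion hG hst hc hprivate hF).trans ?_
  rw [← sum_singleton c e]
  refine hγ.le_sum_of_hits_paths hc (biUnion_subset.2 fun P hP => (hF P hP).subset)
    (singleton_subset_iff.2 he) fun P hP hPF => ⟨e, ?_, mem_singleton_self e⟩
  obtain ⟨b, hbP, hb⟩ := hprivate P hP
  obtain ⟨Q, hQF, hbQ⟩ := mem_biUnion.1 (hPF hbP)
  rw [hb Q (hF Q hQF) hbQ]
  exact (mem_filter.1 hQF).2

/- The walk along the first path up to `v` and along the second one from `v` on contains an `s`-`t`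
path, whose private arc lies on one of the two given paths, so it is one of them. -/
lemma HasPrivateArcs.eq_or_eq_of_common_vertex (hprivate : HasPrivateArcs E s t) {v : V}
    {l₁ l₂ m₁ m₂ : List V} (hl : IsPathList E s t (l₁ ++ v :: l₂))
    (hm : IsPathList E s t (m₁ ++ v :: m₂)) : l₁ = m₁ ∨ l₂ = m₂ := by
  have hlsplit := arcsOf_append l₁ v l₂
  have hmsplit := arcsOf_append m₁ v m₂
  obtain ⟨r, hr⟩ : ∃ r, IsPathList (arcsOf (l₁ ++ [v]) ∪ arcsOf (v :: m₂)) s t r :=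
    exists_isPathList_of_reflTransGen
      ((hl.initial_segment.of_arcsOf_subset subset_union_left).reflTransGen.trans
        (hm.final_segment.of_arcsOf_subset subset_union_right).reflTransGen)
  have hrE : IsPathList E s t r := hr.of_arcsOf_subset (hr.arcsOf_subset.trans
    (union_subset hl.initial_segment.arcsOf_subset hm.final_segment.arcsOf_subset))
  obtain ⟨b, hbr, hb⟩ := hprivate _ ⟨r, hrE, rfl⟩
  rcases mem_union.1 (hr.arcsOf_subset hbr) with hbl | hbm
  · have hrl := hb _ ⟨_, hl, rfl⟩ (hlsplit ▸ mem_union_left _ hbl)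
    have hsubset : arcsOf (v :: l₂) ⊆ arcsOf (v :: m₂) :=
      (disjoint_arcsOf_of_nodup hl.1).symm.left_le_of_le_sup_left
        (subset_union_right.trans (hlsplit ▸ hrl ▸ hr.arcsOf_subset))
    have heq := IsSTPath.eq_of_subset ⟨_, hl.final_segment, rfl⟩ ⟨_, hm.final_segment, rfl⟩ hsubset
    exact .inr (List.cons_injective (hl.final_segment.eq_of_arcsOf_eq hm.final_segment heq))
  · have hrm := hb _ ⟨_, hm, rfl⟩ (hmsplit ▸ mem_union_right _ hbm)
    have hsubset : arcsOf (m₁ ++ [v]) ⊆ arcsOf (l₁ ++ [v]) :=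
      (disjoint_arcsOf_of_nodup hm.1).left_le_of_le_sup_right
        (subset_union_left.trans (hmsplit ▸ hrm ▸ hr.arcsOf_subset))
    have heq := IsSTPath.eq_of_subset ⟨_, hm.initial_segment, rfl⟩ ⟨_, hl.initial_segment, rfl⟩
      hsubset
    exact .inl (List.append_cancel_right
      (hl.initial_segment.eq_of_arcsOf_eq hm.initial_segment heq.symm))

lemma HasPrivateArcs.exists_isPathList_of_transGen (hprivate : HasPrivateArcs E s t)
    (hcover : ∀ e ∈ E, ∃ P, IsSTPath E s t P ∧ e ∈ P) {u v : V}
    (huv : Relation.TransGen (fun x y => (x, y) ∈ E) u v) :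
    ∃ l₁ l₂, IsPathList E s t (l₁ ++ v :: l₂) ∧ u ∈ l₁ := by
  have harc {x y : V} (hxy : (x, y) ∈ E) : ∃ m₁ m₂, IsPathList E s t (m₁ ++ x :: y :: m₂) := by
    obtain ⟨_, ⟨m, hm, rfl⟩, hmem⟩ := hcover _ hxy
    obtain ⟨m₁, m₂, rfl⟩ := exists_eq_append_of_mem_arcsOf hmem
    exact ⟨m₁, m₂, hm⟩
  induction huv with
  | single huv =>
    obtain ⟨m₁, m₂, hm⟩ := harc huv
    exact ⟨m₁ ++ [u], m₂, by rwa [← List.append_cons], by simp⟩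
  | @tail v w _ hvw ih =>
    obtain ⟨l₁, l₂, hl, hu⟩ := ih
    obtain ⟨m₁, m₂, hm⟩ := harc hvw
    have hul : u ∈ l₁ ++ [v] := List.mem_append_left _ hu
    rcases hprivate.eq_or_eq_of_common_vertex hl hm with rfl | rfl <;>
      exact ⟨l₁ ++ [v], _, by rwa [← List.append_cons], hul⟩

lemma HasPrivateArcs.not_hasDirectedCycle (hprivate : HasPrivateArcs E s t)
    (hcover : ∀ e ∈ E, ∃ P, IsSTPath E s t P ∧ e ∈ P) : ¬ HasDirectedCycle E := by
  rintro ⟨v, vs, -, hchain, hclose⟩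
  have hcycle : Relation.TransGen (fun x y => (x, y) ∈ E) v v :=
    .tail' (List.relationReflTransGen_of_exists_isChain_cons vs hchain rfl) hclose
  obtain ⟨l₁, l₂, hl, hv⟩ := hprivate.exists_isPathList_of_transGen hcover hcycle
  exact List.disjoint_of_nodup_append hl.1 hv List.mem_cons_self

end PrivateArcs

theorem convexity_characterization_general
    {V : Type*} [DecidableEq V] {E : Finset (V × V)} {c : V × V → ℝ} {s t : V}
    {γ : Finset (V × V) → ℝ} (hst : s ≠ t) (hc : ∀ e ∈ E, 0 < c e)
    (hγ : IsFlowGame E c s t γ) :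
    GameConvex E γ ↔
      (∀ b, IsBottleneck E c s t b → ∃! P, IsSTPath E s t P ∧ b ∈ P) ∧
      (∀ e ∈ E, ¬ IsBottleneck E c s t e →
        ∑ P ∈ stPaths E s t with e ∈ P, pathCap c P ≤ c e) := by
  have hc' : ∀ e ∈ E, 0 ≤ c e := fun e he => (hc e he).le
  constructor
  · intro hG
    have hunique : ∀ b, IsBottleneck E c s t b → ∃! P, IsSTPath E s t P ∧ b ∈ P := by
      rintro b ⟨P, hP, hbP, hcb⟩
      exact ⟨P, ⟨hP, hbP⟩, fun Q hQ =>
        (hγ.eq_of_bottleneck_mem hG hst hc hP hQ.1 hbP hQ.2 hcb).symm⟩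
    have hprivate := hasPrivateArcs_of_bottleneck_existsUnique hst hunique
    exact ⟨hunique, fun e he _ => hγ.sum_pathCap_le hG hst hc' hprivate he⟩
  · rintro ⟨hunique, hsum⟩
    refine hγ.gameConvex hst hc' fun e he => ?_
    by_cases hb : IsBottleneck E c s t e
    · obtain ⟨P, hP, hPunique⟩ := hunique e hb
      have hsingleton : {P ∈ stPaths E s t | e ∈ P} = {P} := by
        simpa [eq_singleton_iff_unique_mem, mem_stPaths] using ⟨hP, fun Q hQ heQ =>
          hPunique Q ⟨hQ, heQ⟩⟩
      rw [hsingleton, sum_singleton]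
      exact pathCap_le_of_mem hP.2
    · exact hsum e he hb

/-- Main characterization.  Suppose every arc of the flow network lies
on some `s`-`t` path.  The flow game is convex iff (i) the network is acyclic,
(ii) every bottleneck arc belongs to a unique `s`-`t` path, and (iii) every
non-bottleneck arc `e` satisfies `c(e) ≥ Σ_{P ∈ 𝒫_e} c(P)`. -/
theorem convexity_characterization
    {V : Type*} [Fintype V] [DecidableEq V]
    (E : Finset (V × V)) (c : V × V → ℝ) (s t : V) (γ : Finset (V × V) → ℝ)
    (hst : s ≠ t) (hc : ∀ e ∈ E, 0 < c e)
    (hγ : IsFlowGame E c s t γ)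
    (hcover : ∀ e ∈ E, ∃ P : Finset (V × V), IsSTPath E s t P ∧ e ∈ P)
 :
    GameConvex E γ ↔
      (¬ HasDirectedCycle E ∧
       (∀ b : V × V, IsBottleneck E c s t b →
          ∃! P : Finset (V × V), IsSTPath E s t P ∧ b ∈ P) ∧
       (∀ e ∈ E, ¬ IsBottleneck E c s t e →
          ∑ P ∈ (stPaths E s t).filter (fun P => e ∈ P), pathCap c P ≤ c e)) := by
  rw [convexity_characterization_general hst hc hγ]
  exact (and_iff_right_of_imp fun h => HasPrivateArcs.not_hasDirectedCycle
    (hasPrivateArcs_of_bottleneck_existsUnique hst h.1) hcover).symm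
end
end

section
/- Let D = (V, E; c; s, t) be a flow network whose directed graph (V, E) is acyclic. An arc e = (u, v) ∈ E is a bottleneck arc of some s-t path (i.e., e ∈ B) if and only if, in the restricted subgraph D_e = (V, E_{≥c(e)}) where E_{≥c(e)} = {a ∈ E : c(a) ≥ c(e)}, there exists a directed path from s to u and a directed path from v to t (where a path from a vertex to itself is allowed to be trivial). -/
open scoped Classical
open Finset

noncomputable section

/-!
An arc of a path is a bottleneck of it exactly when no arc of the path has smaller capacity, so
`e` is a bottleneck iff it lies on an `s`-`t` path of the subgraph `E_{≥ c e}`. Such a path splits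
at `e` into a path from `s` to the tail of `e` and a path from the head of `e` to `t`. Conversely,
two such paths joined by `e` form a walk, and a walk that revisits a vertex contains a directed
cycle.
-/

section Acyclic

variable {V : Type*} {E F : Finset (V × V)} {a b u v : V} {us vs ws : List V}

theorem HasDirectedCycle.mono (hEF : E ⊆ F) : HasDirectedCycle E → HasDirectedCycle F :=
  fun ⟨v, vs, hnodup, hchain, hlast⟩ =>
    ⟨v, vs, hnodup, hchain.imp fun _ _ h => hEF h, hEF hlast⟩

theorem hasDirectedCycle_of_isChain_cons_of_mem (hchain : (v :: vs).IsChain fun x y => (x, y) ∈ E)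
    (hnodup : vs.Nodup) (hv : v ∈ vs) : HasDirectedCycle E := by
  obtain ⟨l₁, l₂, rfl⟩ := List.append_of_mem hv
  rw [← List.cons_append] at hchain
  have hnodup' : (v :: l₁).Nodup := (List.nodup_middle.1 hnodup).sublist (by simp)
  exact ⟨v, l₁, hnodup', hchain.left_of_append,
    hchain.rel_getLast_head_of_append (by simp) (by simp)⟩

theorem nodup_of_isChain_of_not_hasDirectedCycle (hE : ¬ HasDirectedCycle E)
    (hchain : vs.IsChain fun x y => (x, y) ∈ E) : vs.Nodup := by
  induction vs with
  | nil => exact List.nodup_nil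
  | cons v vs ih =>
    have hnodup := ih hchain.tail
    exact List.nodup_cons.2
      ⟨fun hv => hE (hasDirectedCycle_of_isChain_cons_of_mem hchain hnodup hv), hnodup⟩

theorem IsPathList.disjoint_of_not_hasDirectedCycle (hE : ¬ HasDirectedCycle E)
    (hus : IsPathList E a u us) (hws : IsPathList E v b ws) (huv : (u, v) ∈ E) :
    us.Disjoint ws := by
  obtain ⟨-, -, hlast, hchain⟩ := hus
  obtain ⟨-, hhead, -, hchain'⟩ := hws
  have hjoin : (us ++ ws).IsChain fun x y => (x, y) ∈ E :=
    hchain.append hchain' (by simpa [hlast, hhead] using huv)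
  exact List.disjoint_of_nodup_append (nodup_of_isChain_of_not_hasDirectedCycle hE hjoin)

end Acyclic

section Arcs

variable {V : Type*} {E : Finset (V × V)} {a b u v : V} {vs : List V}

theorem isPathList_iff :
    IsPathList E a b vs ↔ vs.Nodup ∧ vs.head? = some a ∧ vs.getLast? = some b ∧
      vs.IsChain fun x y => (x, y) ∈ E :=
  Iff.rfl

theorem isPathList_append_cons_cons {l₁ l₂ : List V} :
    IsPathList E a b (l₁ ++ u :: v :: l₂) ↔
      IsPathList E a u (l₁ ++ [u]) ∧ (u, v) ∈ E ∧ IsPathList E v b (v :: l₂) ∧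
        (l₁ ++ [u]).Disjoint (v :: l₂) := by
  have hnodup : (l₁ ++ u :: v :: l₂).Nodup ↔
      (l₁ ++ [u]).Nodup ∧ (v :: l₂).Nodup ∧ (l₁ ++ [u]).Disjoint (v :: l₂) := by
    rw [← List.nodup_append', List.append_assoc, List.singleton_append]
  have hhead : (l₁ ++ u :: v :: l₂).head? = (l₁ ++ [u]).head? := by simp
  have hlast : (l₁ ++ u :: v :: l₂).getLast? = (v :: l₂).getLast? := by
    simp [List.getLast?_cons]
  simp only [isPathList_iff, hnodup, hhead, hlast, List.isChain_append_cons_cons,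
    List.getLast?_concat, List.head?_cons]
  tauto

variable [DecidableEq V] {e : V × V}

theorem mem_arcsOf_iff_isInfix : e ∈ arcsOf vs ↔ [e.1, e.2] <:+: vs := by
  induction vs using List.twoStepInduction with
  | nil | singleton => simp [arcsOf, List.infix_cons_iff]
  | cons_cons x y vs _ ih =>
    have hcons : e ∈ arcsOf (x :: y :: vs) ↔ e = (x, y) ∨ e ∈ arcsOf (y :: vs) := by
      simp [arcsOf]
    rw [hcons, ih, List.infix_cons_iff (a := x)]
    simp [Prod.ext_iff]

theorem isChain_mem_iff_arcsOf_subset :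
    (vs.IsChain fun x y => (x, y) ∈ E) ↔ arcsOf vs ⊆ E := by
  constructor
  · intro hchain e he
    exact (hchain.infix (mem_arcsOf_iff_isInfix.1 he)).rel
  · intro hsub
    exact vs.isChain_isInfix.imp fun _ _ h => hsub (mem_arcsOf_iff_isInfix.2 h)

theorem isPathList_filter_iff {p : V × V → Prop} [DecidablePred p] :
    IsPathList (E.filter p) a b vs ↔ IsPathList E a b vs ∧ ∀ e ∈ arcsOf vs, p e := by
  have hsub : arcsOf vs ⊆ E.filter p ↔ arcsOf vs ⊆ E ∧ ∀ e ∈ arcsOf vs, p e := by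
    simp only [Finset.subset_iff, Finset.mem_filter, imp_and, forall_and]
  simp only [isPathList_iff, isChain_mem_iff_arcsOf_subset (E := E.filter p), hsub,
    isChain_mem_iff_arcsOf_subset (E := E), and_assoc]

theorem exists_isPathList_mem_arcsOf_iff (hE : ¬ HasDirectedCycle E) (he : e ∈ E) :
    (∃ vs, IsPathList E a b vs ∧ e ∈ arcsOf vs) ↔
      (∃ vs, IsPathList E a e.1 vs) ∧ ∃ vs, IsPathList E e.2 b vs := by
  constructor
  · rintro ⟨vs, hvs, hmem⟩
    obtain ⟨l₁, l₂, rfl⟩ := mem_arcsOf_iff_isInfix.1 hmem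
    rw [List.append_assoc] at hvs
    obtain ⟨hus, -, hws, -⟩ := isPathList_append_cons_cons.1 hvs
    exact ⟨⟨_, hus⟩, ⟨_, hws⟩⟩
  · rintro ⟨⟨us, hus⟩, ⟨ws, hws⟩⟩
    have hdisj := hus.disjoint_of_not_hasDirectedCycle hE hws he
    obtain ⟨l₁, rfl⟩ := List.getLast?_eq_some_iff.1 hus.2.2.1
    obtain ⟨l₂, rfl⟩ := List.head?_eq_some_iff.1 hws.2.1
    exact ⟨l₁ ++ e.1 :: e.2 :: l₂, isPathList_append_cons_cons.2 ⟨hus, he, hws, hdisj⟩,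
      mem_arcsOf_iff_isInfix.2 ⟨l₁, l₂, by simp⟩⟩

end Arcs

section Bottleneck

variable {V : Type*} {E : Finset (V × V)} {c : V × V → ℝ} {s t : V} {e : V × V}

theorem eq_pathCap_iff_forall_le {P : Finset (V × V)} (he : e ∈ P) :
    c e = pathCap c P ↔ ∀ a ∈ P, c e ≤ c a := by
  constructor
  · intro hcap a ha
    rw [hcap]
    exact csInf_le (P.finite_toSet.image c).bddBelow (Set.mem_image_of_mem c ha)
  · intro hmin
    have hleast : IsLeast (c '' P) (c e) :=
      ⟨Set.mem_image_of_mem c he, Set.forall_mem_image.2 hmin⟩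
    exact hleast.csInf_eq.symm

theorem isBottleneck_iff_exists_isPathList_filter [DecidableEq V] :
    IsBottleneck E c s t e ↔
      ∃ vs, IsPathList (E.filter fun a => c e ≤ c a) s t vs ∧ e ∈ arcsOf vs := by
  simp only [isPathList_filter_iff]
  constructor
  · rintro ⟨_, ⟨vs, hvs, rfl⟩, he, hcap⟩
    exact ⟨vs, ⟨hvs, (eq_pathCap_iff_forall_le he).1 hcap⟩, he⟩
  · rintro ⟨vs, ⟨hvs, hmin⟩, he⟩
    exact ⟨arcsOf vs, ⟨vs, hvs, rfl⟩, he, (eq_pathCap_iff_forall_le he).2 hmin⟩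

theorem bottleneck_recognition_general [DecidableEq V]
    (hacyc : ¬ HasDirectedCycle (E.filter fun a => c e ≤ c a)) (he : e ∈ E) :
    IsBottleneck E c s t e ↔
      (∃ vs, IsPathList (E.filter fun a => c e ≤ c a) s e.1 vs) ∧
        ∃ vs, IsPathList (E.filter fun a => c e ≤ c a) e.2 t vs :=
  isBottleneck_iff_exists_isPathList_filter.trans <|
    exists_isPathList_mem_arcsOf_iff hacyc (Finset.mem_filter.2 ⟨he, le_rfl⟩)

end Bottleneck

/-- Bottleneck recognition.  In an acyclic flow network, an arc
`e = (u, v) ∈ E` is a bottleneck arc of some `s`-`t` path iff in the subgraph restricted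
to arcs of capacity at least `c(e)` there is a directed path from `s` to `u` and a
directed path from `v` to `t` (trivial paths allowed). -/
theorem bottleneck_recognition
    {V : Type*} [Fintype V] [DecidableEq V]
    (E : Finset (V × V)) (c : V × V → ℝ) (s t : V)
    (hst : s ≠ t) (hc : ∀ e ∈ E, 0 < c e)
    (hacyc : ¬ HasDirectedCycle E)
    (e : V × V) (he : e ∈ E) :
    IsBottleneck E c s t e ↔
      ((∃ vs : List V, IsPathList (E.filter (fun a => c e ≤ c a)) s e.1 vs) ∧
       (∃ vs : List V, IsPathList (E.filter (fun a => c e ≤ c a)) e.2 t vs)) :=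
  bottleneck_recognition_general (mt (HasDirectedCycle.mono (Finset.filter_subset _ E)) hacyc) he
end
end

section
/- Let D = (V, E; c; s, t) be a flow network in which every arc belongs to at least one s-t path, and suppose that each bottleneck arc b ∈ B belongs to a unique s-t path. For each s-t path P ∈ 𝒫, choose a bottleneck arc b_P ∈ P with c(b_P) = c(P). Then for every coalition S ⊆ E, the set C_S = {b_P : P ∈ 𝒫, P ⊆ S} intersects every s-t path contained in S (i.e., C_S is an s-t cut of the subnetwork induced by S), the chosen arcs b_P for distinct paths P ⊆ S are pairwise distinct, and Σ_{a ∈ C_S} c(a) = Σ_{P ∈ 𝒫 : P ⊆ S} c(P). -/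
open scoped Classical
open Finset

noncomputable section

section Choice

variable {α β : Type*}

theorem injOn_of_subsingleton_mem [Membership α β] {𝒜 : Set β} {b : β → α}
    (hmem : ∀ P ∈ 𝒜, b P ∈ P) (huniq : ∀ P ∈ 𝒜, {Q ∈ 𝒜 | b P ∈ Q}.Subsingleton) :
    Set.InjOn b 𝒜 := by
  intro P hP Q hQ hPQ
  have hbQ : b P ∈ Q := hPQ ▸ hmem Q hQ
  exact huniq P hP ⟨hP, hmem P hP⟩ ⟨hQ, hbQ⟩

theorem sum_image_eq_sum_of_injOn {M : Type*} [AddCommMonoid M] [DecidableEq α]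
    {𝒜 : Finset β} {b : β → α} {c : α → M} {w : β → M}
    (hinj : Set.InjOn b 𝒜) (hw : ∀ P ∈ 𝒜, c (b P) = w P) :
    ∑ a ∈ 𝒜.image b, c a = ∑ P ∈ 𝒜, w P :=
  (sum_image hinj).trans (sum_congr rfl hw)

end Choice

section Network

variable {V : Type*} [DecidableEq V] {E : Finset (V × V)} {c : V × V → ℝ} {s t : V}
  {bp : Finset (V × V) → V × V}

theorem isSTPath_of_mem_stPaths {P : Finset (V × V)} (hP : P ∈ stPaths E s t) :
    IsSTPath E s t P :=
  (mem_filter.mp hP).2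

theorem injOn_stPaths_of_isBottleneck_existsUnique
    (huniq : ∀ b : V × V, IsBottleneck E c s t b →
      ∃! P : Finset (V × V), IsSTPath E s t P ∧ b ∈ P)
    (hbp : ∀ P ∈ stPaths E s t, bp P ∈ P ∧ c (bp P) = pathCap c P) :
    Set.InjOn bp (stPaths E s t) := by
  refine injOn_of_subsingleton_mem (fun P hP => (hbp P hP).1) fun P hP Q hQ R hR => ?_
  have hbottleneck : IsBottleneck E c s t (bp P) :=
    ⟨P, isSTPath_of_mem_stPaths hP, hbp P hP⟩
  exact (huniq _ hbottleneck).unique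
    ⟨isSTPath_of_mem_stPaths hQ.1, hQ.2⟩ ⟨isSTPath_of_mem_stPaths hR.1, hR.2⟩

theorem bottleneck_cut_general
    (huniq : ∀ b : V × V, IsBottleneck E c s t b →
      ∃! P : Finset (V × V), IsSTPath E s t P ∧ b ∈ P)
    (hbp : ∀ P ∈ stPaths E s t, bp P ∈ P ∧ c (bp P) = pathCap c P)
    (S : Finset (V × V)) :
    (∀ Q ∈ stPaths E s t, Q ⊆ S →
      ∃ P ∈ stPaths E s t, P ⊆ S ∧ bp P ∈ Q) ∧
    (∀ P ∈ stPaths E s t, ∀ Q ∈ stPaths E s t, P ⊆ S → Q ⊆ S →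
      bp P = bp Q → P = Q) ∧
    (∑ a ∈ ((stPaths E s t).filter (fun P => P ⊆ S)).image bp, c a
      = ∑ P ∈ (stPaths E s t).filter (fun P => P ⊆ S), pathCap c P) := by
  have hinj : Set.InjOn bp (stPaths E s t) :=
    injOn_stPaths_of_isBottleneck_existsUnique huniq hbp
  have hsub : (stPaths E s t).filter (fun P => P ⊆ S) ⊆ stPaths E s t := filter_subset _ _
  refine ⟨fun Q hQ hQS => ⟨Q, hQ, hQS, (hbp Q hQ).1⟩,
    fun P hP Q hQ _ _ hPQ => hinj hP hQ hPQ, ?_⟩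
  exact sum_image_eq_sum_of_injOn (hinj.mono (coe_subset.mpr hsub))
    fun P hP => (hbp P (hsub hP)).2

end Network

/-- Suppose every arc lies on some `s`-`t` path and every bottleneck
arc belongs to a unique `s`-`t` path.  Choosing a bottleneck arc `b_P` for each `s`-`t`
path `P`, for every coalition `S ⊆ E` the set `C_S = {b_P : P ⊆ S}` meets every `s`-`t`
path contained in `S`, the chosen arcs of distinct paths contained in `S` are distinct,
and `Σ_{a ∈ C_S} c(a) = Σ_{P ∈ 𝒫 : P ⊆ S} c(P)`. -/
theorem bottleneck_cut
    {V : Type*} [Fintype V] [DecidableEq V]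
    (E : Finset (V × V)) (c : V × V → ℝ) (s t : V)
    (hst : s ≠ t) (hc : ∀ e ∈ E, 0 < c e)
    (hcover : ∀ e ∈ E, ∃ P : Finset (V × V), IsSTPath E s t P ∧ e ∈ P)
    (huniq : ∀ b : V × V, IsBottleneck E c s t b →
      ∃! P : Finset (V × V), IsSTPath E s t P ∧ b ∈ P)
    (bp : Finset (V × V) → V × V)
    (hbp : ∀ P ∈ stPaths E s t, bp P ∈ P ∧ c (bp P) = pathCap c P) :
    ∀ S : Finset (V × V), S ⊆ E →
      (∀ Q ∈ stPaths E s t, Q ⊆ S →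
        ∃ P ∈ stPaths E s t, P ⊆ S ∧ bp P ∈ Q) ∧
      (∀ P ∈ stPaths E s t, ∀ Q ∈ stPaths E s t, P ⊆ S → Q ⊆ S →
        bp P = bp Q → P = Q) ∧
      (∑ a ∈ ((stPaths E s t).filter (fun P => P ⊆ S)).image bp, c a
        = ∑ P ∈ (stPaths E s t).filter (fun P => P ⊆ S), pathCap c P) :=
  fun S _ => bottleneck_cut_general huniq hbp S
end
end
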